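/- Let d ≤ 2, q > 1/2, α, β ∈ ℝ, 0 < δ ≤ 1 and G > 0. There exists a constant C < ∞ (depending only on d, q, α, δ and G) such that: for every y ∈ ℝ^d, every bounded continuous forcing g : ℝ^d × [0,∞) → ℂ with sup_{t ≥ 0} ∫ φ_{δ,y}(x)|g(x,t)|² dx ≤ G, and every bounded classical solution u on ℝ^d × [0,∞) of the Ginzburg–Landau equation ∂_t u = (1+iα)Δu + u − (1+iβ)|u|^{2q}u + g, one has for all t ≥ 0: ∫ φ_{δ,y}(x)|u(x,t)|² dx ≤ e^{−t} ∫ φ_{δ,y}(x)|u(x,0)|² dx + C. -/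

import Mathlib

open Complex MeasureTheory

/-- The weight function `φ_{δ,y}(x) = exp(−√(1+δ²|x−y|²))` on `ℝ^d`. -/
noncomputable def phi (d : ℕ) (δ : ℝ) (y x : EuclideanSpace ℝ (Fin d)) : ℝ :=
  Real.exp (-Real.sqrt (1 + δ ^ 2 * ‖x - y‖ ^ 2))

/-- The Laplacian `Δw(x) = Σ_j ∂²_j w(x)` of `w : ℝ^d → ℂ`. -/
noncomputable def lap (d : ℕ) (w : EuclideanSpace ℝ (Fin d) → ℂ)
    (x : EuclideanSpace ℝ (Fin d)) : ℂ :=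
  ∑ j : Fin d, iteratedFDeriv ℝ 2 w x
    ![EuclideanSpace.single j (1 : ℝ), EuclideanSpace.single j (1 : ℝ)]

/-- `w` is a bounded classical solution on `ℝ^d × S` (for a time set `S ⊆ ℝ`) of the
Ginzburg–Landau equation `∂_t w = (1+iα)Δw + w − (1+iβ)|w|^{2q}w + g`. -/
def IsGLSolution (d : ℕ) (q α β : ℝ) (S : Set ℝ)
    (g w : EuclideanSpace ℝ (Fin d) → ℝ → ℂ) : Prop :=
  ContinuousOn (fun p : EuclideanSpace ℝ (Fin d) × ℝ => w p.1 p.2) (Set.univ ×ˢ S) ∧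
  (∀ t ∈ S, ContDiff ℝ 2 (fun x => w x t)) ∧
  (∃ B : ℝ, ∀ t ∈ S, ∀ x, ‖w x t‖ ≤ B ∧ ‖fderiv ℝ (fun x' => w x' t) x‖ ≤ B ∧
      ‖iteratedFDeriv ℝ 2 (fun x' => w x' t) x‖ ≤ B) ∧
  (∀ x, ∀ t ∈ S, HasDerivWithinAt (fun s => w x s)
      ((1 + Complex.I * (α : ℂ)) * lap d (fun x' => w x' t) x + w x t -
        (1 + Complex.I * (β : ℂ)) * ((‖w x t‖ ^ (2 * q) : ℝ) : ℂ) * w x t + g x t) S t)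

/-!
Differentiating `E(t) = ∫ φ |u(t)|²` in time, the diffusion contributes `2 Re ∫ φ ū (1+iα) Δu`.
Integration by parts turns this into `-2 ∫ φ |∇u|²` plus a commutator with `∇φ`; since
`|∇φ| ≤ K φ`, Young's inequality absorbs the commutator into the dissipation at the price of a
multiple of `E`. The real part of the nonlinear term is `-2 ∫ φ |u|^{2q+2}`, independently of `β`,
and for `q > 0` it dominates any multiple of `E` up to a constant. Hence
`E' ≤ C ∫ φ + ∫ φ |g|² - E`, and Grönwall's inequality concludes.
-/

open Set Topology
open scoped InnerProductSpace

section BoundedIntegrands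

variable {X H : Type*} [MeasurableSpace X] {μ : Measure X} [NormedAddCommGroup H] {φ : X → ℝ}
  {f g : X → H} {B B' : ℝ}

lemma integrable_mul_norm_sq_of_norm_le (hφ : Integrable φ μ) (hf : AEStronglyMeasurable f μ)
    (hB : ∀ x, ‖f x‖ ≤ B) : Integrable (fun x => φ x * ‖f x‖ ^ 2) μ := by
  refine hφ.mul_bdd (hf.norm.pow 2) (c := B ^ 2) (.of_forall fun x => ?_)
  rw [norm_pow, norm_norm]
  exact pow_le_pow_left₀ (norm_nonneg _) (hB x) 2

variable [InnerProductSpace ℝ H]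

lemma norm_inner_le_mul_of_norm_le {x y : H} (hx : ‖x‖ ≤ B) (hy : ‖y‖ ≤ B') :
    ‖⟪x, y⟫_ℝ‖ ≤ B * B' :=
  (norm_inner_le_norm x y).trans
    (mul_le_mul hx hy (norm_nonneg y) ((norm_nonneg x).trans hx))

lemma integrable_mul_inner_of_norm_le (hφ : Integrable φ μ) (hf : AEStronglyMeasurable f μ)
    (hB : ∀ x, ‖f x‖ ≤ B) (hg : AEStronglyMeasurable g μ) (hB' : ∀ x, ‖g x‖ ≤ B') :
    Integrable (fun x => φ x * ⟪f x, g x⟫_ℝ) μ :=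
  hφ.mul_bdd (hf.inner hg) (.of_forall fun x => norm_inner_le_mul_of_norm_le (hB x) (hB' x))

end BoundedIntegrands

section Weight

variable {E F : Type*} [NormedAddCommGroup E] [NormedSpace ℝ E] [MeasurableSpace E]
  [NormedAddCommGroup F] [NormedSpace ℝ F] {μ : Measure E} {φ : E → ℝ} {K : ℝ}

/-- Integrable nonnegative weights `φ` with `|∇φ| ≤ K φ`, so that `log φ` is `K`-Lipschitz where
`φ` is positive. The gradient bound is what allows commutators with `φ` to be absorbed. -/
structure IsLogLipschitzWeight (μ : Measure E) (K : ℝ) (φ : E → ℝ) : Prop where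
  nonneg : ∀ x, 0 ≤ φ x
  differentiable : Differentiable ℝ φ
  norm_fderiv_le : ∀ x, ‖fderiv ℝ φ x‖ ≤ K * φ x
  integrable : Integrable φ μ

namespace IsLogLipschitzWeight

lemma abs_fderiv_apply_le (hφ : IsLogLipschitzWeight μ K φ) {e : E} (he : ‖e‖ ≤ 1) (x : E) :
    |fderiv ℝ φ x e| ≤ K * φ x :=
  ((fderiv ℝ φ x).unit_le_opNorm e he).trans (hφ.norm_fderiv_le x)

variable [BorelSpace E]

lemma integrable_fderiv_apply (hφ : IsLogLipschitzWeight μ K φ) (e : E) :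
    Integrable (fun x => fderiv ℝ φ x e) μ := by
  refine ((hφ.integrable.const_mul K).mul_const ‖e‖).mono'
    (measurable_fderiv_apply_const ℝ φ e).aestronglyMeasurable (.of_forall fun x => ?_)
  exact (fderiv ℝ φ x).le_of_opNorm_le (hφ.norm_fderiv_le x) e

lemma integral_fderiv_smul_add_smul_fderiv_eq_zero [FiniteDimensional ℝ E] [μ.IsAddHaarMeasure]
    (hφ : IsLogLipschitzWeight μ K φ) {V : E → F} (hV : ContDiff ℝ 1 V) {e : E} {B B' : ℝ}
    (hB : ∀ x, ‖V x‖ ≤ B) (hB' : ∀ x, ‖fderiv ℝ V x e‖ ≤ B') :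
    Integrable (fun x => fderiv ℝ φ x e • V x + φ x • fderiv ℝ V x e) μ ∧
      ∫ x, (fderiv ℝ φ x e • V x + φ x • fderiv ℝ V x e) ∂μ = 0 := by
  have hVm : AEStronglyMeasurable V μ := hV.continuous.aestronglyMeasurable
  have hV'm : AEStronglyMeasurable (fun x => fderiv ℝ V x e) μ :=
    ((hV.continuous_fderiv one_ne_zero).clm_apply continuous_const).aestronglyMeasurable
  have hφ'V : Integrable (fun x => fderiv ℝ φ x e • V x) μ :=
    (hφ.integrable_fderiv_apply e).smul_bdd B hVm (.of_forall hB)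
  have hφV' : Integrable (fun x => φ x • fderiv ℝ V x e) μ :=
    hφ.integrable.smul_bdd B' hV'm (.of_forall hB')
  refine ⟨hφ'V.add hφV', ?_⟩
  rw [integral_add hφ'V hφV', integral_smul_fderiv_eq_neg_fderiv_smul_of_integrable hφ'V hφV'
    (hφ.integrable.smul_bdd B hVm (.of_forall hB)) (fun x _ => hφ.differentiable x)
    (fun x _ => hV.differentiable one_ne_zero x), add_neg_cancel]

lemma comp_smul_sub [FiniteDimensional ℝ E] [μ.IsAddHaarMeasure]
    (hφ : IsLogLipschitzWeight μ K φ) {c : ℝ} (hc : c ≠ 0) (y : E) :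
    IsLogLipschitzWeight μ (|c| * K) fun x => φ (c • (x - y)) where
  nonneg x := hφ.nonneg _
  differentiable := hφ.differentiable.comp ((differentiable_id.sub_const y).const_smul c)
  norm_fderiv_le x := by
    rw [fderiv_comp_sub (f := fun x => φ (c • x)) y, fderiv_comp_smul, norm_smul, Real.norm_eq_abs,
      mul_assoc]
    gcongr
    exact hφ.norm_fderiv_le _
  integrable := (hφ.integrable.comp_smul hc).comp_sub_right y

end IsLogLipschitzWeight

lemma isLogLipschitzWeight_exp_neg {ψ : E → ℝ} {K : NNReal} (hψ : Differentiable ℝ ψ)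
    (hK : LipschitzWith K ψ) (hint : Integrable (fun x => Real.exp (-ψ x)) μ) :
    IsLogLipschitzWeight μ K fun x => Real.exp (-ψ x) where
  nonneg x := (Real.exp_pos _).le
  differentiable := hψ.neg.exp
  norm_fderiv_le x := by
    rw [fderiv_exp (hψ x).fun_neg, norm_smul, Real.norm_of_nonneg (Real.exp_pos _).le,
      fderiv_fun_neg, norm_neg, mul_comm]
    gcongr
    exact norm_fderiv_le_of_lipschitz ℝ hK
  integrable := hint

end Weight

section JapaneseBracket

lemma lipschitzWith_sqrt_one_add_norm_sq {E : Type*} [NormedAddCommGroup E] :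
    LipschitzWith 1 fun x : E => √(1 + ‖x‖ ^ 2) := by
  have hnorm (x : E) : √(1 + ‖x‖ ^ 2) = ‖WithLp.toLp 2 ((1 : ℝ), x)‖ := by
    simp [WithLp.prod_norm_eq_of_L2]
  refine .of_dist_le_mul fun x x' => ?_
  simp only [hnorm, NNReal.coe_one, one_mul]
  refine (abs_norm_sub_norm_le _ _).trans_eq ?_
  simp [← WithLp.toLp_sub, dist_eq_norm]

lemma integrable_exp_neg_sqrt_one_add_norm_sq {E : Type*} [NormedAddCommGroup E] [NormedSpace ℝ E]
    [FiniteDimensional ℝ E] [MeasurableSpace E] [BorelSpace E] {μ : Measure E}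
    [μ.IsAddHaarMeasure] : Integrable (fun x : E => Real.exp (-√(1 + ‖x‖ ^ 2))) μ := by
  set n := Module.finrank ℝ E + 1 with hn
  have hr : (Module.finrank ℝ E : ℝ) < (n : ℝ) := by simp [hn]
  refine ((integrable_rpow_neg_one_add_norm_sq (μ := μ) hr).const_mul (n.factorial : ℝ)).mono'
    (by fun_prop) (.of_forall fun x => ?_)
  have hpos : 0 < 1 + ‖x‖ ^ 2 := by positivity
  have hpow : (1 + ‖x‖ ^ 2) ^ (-(n : ℝ) / 2) = (√(1 + ‖x‖ ^ 2) ^ n)⁻¹ := by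
    rw [Real.sqrt_eq_rpow, ← Real.rpow_mul_natCast hpos.le, ← Real.rpow_neg hpos.le]
    ring_nf
  rw [Real.norm_of_nonneg (Real.exp_pos _).le, Real.exp_neg, hpow, ← div_eq_mul_inv, ← inv_div]
  exact inv_anti₀ (by positivity) (Real.pow_div_factorial_le_exp _ (Real.sqrt_nonneg _) n)

lemma isLogLipschitzWeight_exp_neg_sqrt_one_add_norm_sq {E : Type*} [NormedAddCommGroup E]
    [InnerProductSpace ℝ E] [FiniteDimensional ℝ E] [MeasurableSpace E] [BorelSpace E]
    {μ : Measure E} [μ.IsAddHaarMeasure] :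
    IsLogLipschitzWeight μ 1 fun x => Real.exp (-√(1 + ‖x‖ ^ 2)) :=
  isLogLipschitzWeight_exp_neg
    ((((differentiable_id (𝕜 := ℝ)).norm_sq ℝ).const_add 1).sqrt fun x => by positivity)
    lipschitzWith_sqrt_one_add_norm_sq integrable_exp_neg_sqrt_one_add_norm_sq

lemma isLogLipschitzWeight_phi {d : ℕ} {δ : ℝ} (hδ : δ ≠ 0) (y : EuclideanSpace ℝ (Fin d)) :
    IsLogLipschitzWeight volume |δ| (phi d δ y) := by
  have hphi : phi d δ y = fun x => Real.exp (-√(1 + ‖δ • (x - y)‖ ^ 2)) := by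
    funext x
    simp [phi, norm_smul, mul_pow]
  simpa [hphi] using isLogLipschitzWeight_exp_neg_sqrt_one_add_norm_sq.comp_smul_sub hδ y

lemma integral_phi_eq_integral_phi_zero {d : ℕ} (δ : ℝ) (y : EuclideanSpace ℝ (Fin d)) :
    ∫ x, phi d δ y x = ∫ x, phi d δ 0 x := by
  simpa [phi] using integral_sub_right_eq_self (phi d δ 0) y

end JapaneseBracket

section C2Bound

variable {E F : Type*} [NormedAddCommGroup E] [NormedSpace ℝ E] [NormedAddCommGroup F]
  [NormedSpace ℝ F] {B : ℝ} {w : E → F}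

/-- `w` is of class `C²` and `w`, `Dw`, `D²w` are bounded by `B`: the regularity of a bounded
classical solution at a fixed time. -/
structure HasC2Bound (B : ℝ) (w : E → F) : Prop where
  contDiff : ContDiff ℝ 2 w
  norm_le : ∀ x, ‖w x‖ ≤ B
  norm_fderiv_le : ∀ x, ‖fderiv ℝ w x‖ ≤ B
  norm_iteratedFDeriv_le : ∀ x, ‖iteratedFDeriv ℝ 2 w x‖ ≤ B

namespace HasC2Bound

lemma aestronglyMeasurable [MeasurableSpace E] [OpensMeasurableSpace E]
    [SecondCountableTopologyEither E F] {μ : Measure E} (hw : HasC2Bound B w) :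
    AEStronglyMeasurable w μ :=
  hw.contDiff.continuous.aestronglyMeasurable

lemma contDiff_fderiv_apply (hw : HasC2Bound B w) (e : E) :
    ContDiff ℝ 1 fun x => fderiv ℝ w x e :=
  (hw.contDiff.fderiv_right le_rfl).clm_apply contDiff_const

lemma fderiv_fderiv_apply (hw : HasC2Bound B w) (x e : E) :
    fderiv ℝ (fun x => fderiv ℝ w x e) x e = iteratedFDeriv ℝ 2 w x ![e, e] := by
  have hw' : DifferentiableAt ℝ (fderiv ℝ w) x :=
    (hw.contDiff.fderiv_right le_rfl).differentiable one_ne_zero x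
  simp [iteratedFDeriv_two_apply, fderiv_clm_apply hw' (differentiableAt_const e)]

lemma continuous_iteratedFDeriv_apply (hw : HasC2Bound B w) (m : Fin 2 → E) :
    Continuous fun x => iteratedFDeriv ℝ 2 w x m :=
  (hw.contDiff.continuous_iteratedFDeriv le_rfl).eval_const m

lemma norm_fderiv_apply_le (hw : HasC2Bound B w) {e : E} (he : ‖e‖ ≤ 1) (x : E) :
    ‖fderiv ℝ w x e‖ ≤ B :=
  ((fderiv ℝ w x).unit_le_opNorm e he).trans (hw.norm_fderiv_le x)

lemma norm_iteratedFDeriv_apply_le (hw : HasC2Bound B w) {e : E} (he : ‖e‖ ≤ 1) (x : E) :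
    ‖iteratedFDeriv ℝ 2 w x ![e, e]‖ ≤ B := by
  have h := (iteratedFDeriv ℝ 2 w x).le_opNorm_mul_pow_of_le (m := ![e, e]) (b := 1)
    ((pi_norm_le_iff_of_nonneg zero_le_one).2 (by simp [Fin.forall_fin_two, he]))
  exact h.trans (by simpa using hw.norm_iteratedFDeriv_le x)

end HasC2Bound

end C2Bound

section Dissipation

variable {H : Type*} [NormedAddCommGroup H] [InnerProductSpace ℝ H] {T : H →L[ℝ] H} {a : ℝ}

lemma neg_mul_inner_le_of_coercive (ha : 0 < a) (hT : ∀ v, a * ‖v‖ ^ 2 ≤ ⟪v, T v⟫_ℝ)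
    {φ ψ K : ℝ} (hφ : 0 ≤ φ) (hψ : |ψ| ≤ K * φ) (z p : H) :
    -(ψ * ⟪z, T p⟫_ℝ) ≤ φ * (⟪p, T p⟫_ℝ + K ^ 2 * ‖T‖ ^ 2 / (4 * a) * ‖z‖ ^ 2) := by
  have hinner : |⟪z, T p⟫_ℝ| ≤ ‖z‖ * (‖T‖ * ‖p‖) :=
    (abs_real_inner_le_norm _ _).trans (by gcongr; exact T.le_opNorm p)
  have hyoung : K * (‖z‖ * (‖T‖ * ‖p‖)) ≤
      a * ‖p‖ ^ 2 + K ^ 2 * ‖T‖ ^ 2 / (4 * a) * ‖z‖ ^ 2 := by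
    have hsq : a * ‖p‖ ^ 2 + K ^ 2 * ‖T‖ ^ 2 / (4 * a) * ‖z‖ ^ 2 - K * (‖z‖ * (‖T‖ * ‖p‖)) =
        (2 * a * ‖p‖ - K * ‖T‖ * ‖z‖) ^ 2 / (4 * a) := by
      field_simp
      ring
    exact sub_nonneg.1 (hsq ▸ by positivity)
  calc -(ψ * ⟪z, T p⟫_ℝ) ≤ |ψ| * |⟪z, T p⟫_ℝ| := (neg_le_abs _).trans_eq (abs_mul _ _)
    _ ≤ K * φ * (‖z‖ * (‖T‖ * ‖p‖)) :=
      mul_le_mul hψ hinner (abs_nonneg _) ((abs_nonneg _).trans hψ)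
    _ = φ * (K * (‖z‖ * (‖T‖ * ‖p‖))) := by ring
    _ ≤ φ * (⟪p, T p⟫_ℝ + K ^ 2 * ‖T‖ ^ 2 / (4 * a) * ‖z‖ ^ 2) := by
      gcongr
      linarith [hT p]

variable {E : Type*} [NormedAddCommGroup E] [NormedSpace ℝ E] {w : E → H} {B : ℝ}

lemma HasC2Bound.fderiv_inner_fderiv_apply (hw : HasC2Bound B w) (x e : E) :
    fderiv ℝ (fun x => ⟪w x, T (fderiv ℝ w x e)⟫_ℝ) x e =
      ⟪w x, T (iteratedFDeriv ℝ 2 w x ![e, e])⟫_ℝ + ⟪fderiv ℝ w x e, T (fderiv ℝ w x e)⟫_ℝ := by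
  have hw' : DifferentiableAt ℝ (fun x => fderiv ℝ w x e) x :=
    (hw.contDiff_fderiv_apply e).differentiable one_ne_zero x
  have hTw' : HasFDerivAt (fun x => T (fderiv ℝ w x e)) _ x :=
    T.hasFDerivAt.comp x hw'.hasFDerivAt
  rw [fderiv_inner_apply ℝ (hw.contDiff.differentiable two_ne_zero x) hTw'.differentiableAt,
    hTw'.fderiv, ContinuousLinearMap.comp_apply, hw.fderiv_fderiv_apply]

namespace IsLogLipschitzWeight

variable [MeasurableSpace E] [BorelSpace E] {μ : Measure E} {φ : E → ℝ} {K : ℝ}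

lemma integrable_mul_inner_iteratedFDeriv [SecondCountableTopologyEither E H]
    (hφ : IsLogLipschitzWeight μ K φ) (hw : HasC2Bound B w) {e : E} (he : ‖e‖ ≤ 1) :
    Integrable (fun x => φ x * ⟪w x, T (iteratedFDeriv ℝ 2 w x ![e, e])⟫_ℝ) μ :=
  integrable_mul_inner_of_norm_le hφ.integrable hw.aestronglyMeasurable hw.norm_le
    (T.continuous.comp (hw.continuous_iteratedFDeriv_apply _)).aestronglyMeasurable
    fun x => T.le_opNorm_of_le (hw.norm_iteratedFDeriv_apply_le he x)

lemma integral_mul_inner_iteratedFDeriv_le [FiniteDimensional ℝ E] [μ.IsAddHaarMeasure]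
    (hφ : IsLogLipschitzWeight μ K φ) (hw : HasC2Bound B w) (ha : 0 < a)
    (hT : ∀ v, a * ‖v‖ ^ 2 ≤ ⟪v, T v⟫_ℝ) {e : E} (he : ‖e‖ ≤ 1) :
    ∫ x, φ x * ⟪w x, T (iteratedFDeriv ℝ 2 w x ![e, e])⟫_ℝ ∂μ ≤
      K ^ 2 * ‖T‖ ^ 2 / (4 * a) * ∫ x, φ x * ‖w x‖ ^ 2 ∂μ := by
  set V : E → ℝ := fun x => ⟪w x, T (fderiv ℝ w x e)⟫_ℝ with hV
  have hV1 : ContDiff ℝ 1 V :=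
    (hw.contDiff.of_le one_le_two).inner ℝ (T.contDiff.comp (hw.contDiff_fderiv_apply e))
  have hVB (x : E) : ‖V x‖ ≤ B * (‖T‖ * B) :=
    norm_inner_le_mul_of_norm_le (hw.norm_le x) (T.le_opNorm_of_le (hw.norm_fderiv_apply_le he x))
  have hV'B (x : E) : ‖fderiv ℝ V x e‖ ≤ B * (‖T‖ * B) + B * (‖T‖ * B) := by
    rw [hV, hw.fderiv_inner_fderiv_apply]
    exact norm_add_le_of_le
      (norm_inner_le_mul_of_norm_le (hw.norm_le x)
        (T.le_opNorm_of_le (hw.norm_iteratedFDeriv_apply_le he x)))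
      (norm_inner_le_mul_of_norm_le (hw.norm_fderiv_apply_le he x)
        (T.le_opNorm_of_le (hw.norm_fderiv_apply_le he x)))
  obtain ⟨hdiv, hdiv_zero⟩ := hφ.integral_fderiv_smul_add_smul_fderiv_eq_zero hV1 hVB hV'B
  have hw2 := (integrable_mul_norm_sq_of_norm_le hφ.integrable hw.aestronglyMeasurable
    hw.norm_le).const_mul (K ^ 2 * ‖T‖ ^ 2 / (4 * a))
  calc ∫ x, φ x * ⟪w x, T (iteratedFDeriv ℝ 2 w x ![e, e])⟫_ℝ ∂μ
      ≤ ∫ x, ((fderiv ℝ φ x e • V x + φ x • fderiv ℝ V x e) +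
          K ^ 2 * ‖T‖ ^ 2 / (4 * a) * (φ x * ‖w x‖ ^ 2)) ∂μ := by
        refine integral_mono (hφ.integrable_mul_inner_iteratedFDeriv hw he) (hdiv.add hw2)
          fun x => ?_
        have habsorb := neg_mul_inner_le_of_coercive ha hT (hφ.nonneg x)
          (hφ.abs_fderiv_apply_le he x) (w x) (fderiv ℝ w x e)
        simp only [hV, hw.fderiv_inner_fderiv_apply, smul_eq_mul]
        linarith
    _ = K ^ 2 * ‖T‖ ^ 2 / (4 * a) * ∫ x, φ x * ‖w x‖ ^ 2 ∂μ := by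
        rw [integral_add hdiv hw2, hdiv_zero, zero_add, integral_const_mul]

end IsLogLipschitzWeight

end Dissipation

section Laplacian

variable {d : ℕ} {w : EuclideanSpace ℝ (Fin d) → ℂ} {B : ℝ}

lemma HasC2Bound.continuous_lap (hw : HasC2Bound B w) : Continuous (lap d w) :=
  continuous_finsetSum _ fun _ _ => hw.continuous_iteratedFDeriv_apply _

lemma HasC2Bound.norm_lap_le (hw : HasC2Bound B w) (x : EuclideanSpace ℝ (Fin d)) :
    ‖lap d w x‖ ≤ d * B :=
  (norm_sum_le_of_le _ fun _ _ => hw.norm_iteratedFDeriv_apply_le (by simp) x).trans (by simp)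

lemma IsLogLipschitzWeight.integral_mul_inner_lap_le {μ : Measure (EuclideanSpace ℝ (Fin d))}
    [μ.IsAddHaarMeasure] {φ : EuclideanSpace ℝ (Fin d) → ℝ} {K : ℝ}
    (hφ : IsLogLipschitzWeight μ K φ) (hw : HasC2Bound B w) {T : ℂ →L[ℝ] ℂ} {a : ℝ} (ha : 0 < a)
    (hT : ∀ v, a * ‖v‖ ^ 2 ≤ ⟪v, T v⟫_ℝ) :
    ∫ x, φ x * ⟪w x, T (lap d w x)⟫_ℝ ∂μ ≤
      d * (K ^ 2 * ‖T‖ ^ 2 / (4 * a)) * ∫ x, φ x * ‖w x‖ ^ 2 ∂μ := by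
  simp only [lap, map_sum, inner_sum, Finset.mul_sum]
  rw [integral_finsetSum _ fun j _ => hφ.integrable_mul_inner_iteratedFDeriv hw (by simp)]
  refine (Finset.sum_le_sum fun j _ =>
    hφ.integral_mul_inner_iteratedFDeriv_le hw ha hT (by simp)).trans_eq ?_
  simp [mul_assoc]

end Laplacian

section GinzburgLandau

lemma inner_mul_self_right (c z : ℂ) : ⟪z, c * z⟫_ℝ = c.re * ‖z‖ ^ 2 := by
  rw [Complex.inner, mul_assoc, Complex.mul_conj', ← Complex.ofReal_pow, Complex.re_mul_ofReal]

/-- The reaction term `z - (1+iβ)|z|^{2q}z + h` of the Ginzburg–Landau equation, where `h` is the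
value of the forcing. -/
noncomputable def glReaction (q β : ℝ) (z h : ℂ) : ℂ :=
  z - (1 + Complex.I * (β : ℂ)) * ((‖z‖ ^ (2 * q) : ℝ) : ℂ) * z + h

/-- The right-hand side `(1+iα)Δw + w - (1+iβ)|w|^{2q}w + h` of the Ginzburg–Landau equation at a
fixed time, split into its diffusion and reaction parts. -/
noncomputable def glField (d : ℕ) (q α β : ℝ) (h w : EuclideanSpace ℝ (Fin d) → ℂ)
    (x : EuclideanSpace ℝ (Fin d)) : ℂ :=
  (1 + Complex.I * (α : ℂ)) * lap d w x + glReaction q β (w x) (h x)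

lemma exists_mul_sq_le_add_rpow_mul_sq {q : ℝ} (hq : 0 < q) (A : ℝ) :
    ∃ C : ℝ, 0 ≤ C ∧ ∀ s : ℝ, 0 ≤ s → A * s ^ 2 ≤ C + s ^ (2 * q) * s ^ 2 := by
  set R := |A| ^ (2 * q)⁻¹
  refine ⟨|A| * R ^ 2, by positivity, fun s hs => ?_⟩
  have hA : A * s ^ 2 ≤ |A| * s ^ 2 := by
    gcongr
    exact le_abs_self A
  rcases le_total s R with hsR | hRs
  · have hsmall : |A| * s ^ 2 ≤ |A| * R ^ 2 := by gcongr
    have hdamp : 0 ≤ s ^ (2 * q) * s ^ 2 := by positivity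
    linarith
  · have hlarge : |A| * s ^ 2 ≤ s ^ (2 * q) * s ^ 2 := by
      gcongr
      exact (Real.rpow_inv_le_iff_of_pos (abs_nonneg A) hs (by positivity)).1 hRs
    have hconst : 0 ≤ |A| * R ^ 2 := by positivity
    linarith

lemma inner_glReaction (q β : ℝ) (z h : ℂ) :
    ⟪z, glReaction q β z h⟫_ℝ = ‖z‖ ^ 2 - ‖z‖ ^ (2 * q) * ‖z‖ ^ 2 + ⟪z, h⟫_ℝ := by
  rw [glReaction, inner_add_right, inner_sub_right, inner_mul_self_right,
    real_inner_self_eq_norm_sq, Complex.re_mul_ofReal]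
  simp

lemma exists_two_mul_inner_glReaction_le {q : ℝ} (hq : 0 < q) (L : ℝ) :
    ∃ C : ℝ, 0 ≤ C ∧ ∀ (β : ℝ) (z h : ℂ),
      2 * ⟪z, glReaction q β z h⟫_ℝ ≤ C + ‖h‖ ^ 2 - L * ‖z‖ ^ 2 := by
  obtain ⟨C, hC0, hC⟩ := exists_mul_sq_le_add_rpow_mul_sq hq ((L + 3) / 2)
  refine ⟨2 * C, by positivity, fun β z h => ?_⟩
  have hforce : 2 * ⟪z, h⟫_ℝ ≤ ‖z‖ ^ 2 + ‖h‖ ^ 2 := by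
    linarith [real_inner_le_norm z h, two_mul_le_add_sq ‖z‖ ‖h‖]
  rw [inner_glReaction]
  linarith [hC ‖z‖ (norm_nonneg z)]

lemma continuous_glReaction {q : ℝ} (hq : 0 < q) (β : ℝ) :
    Continuous fun p : ℂ × ℂ => glReaction q β p.1 p.2 := by
  have hpow : Continuous fun p : ℂ × ℂ => ‖p.1‖ ^ (2 * q) :=
    continuous_fst.norm.rpow_const fun _ => Or.inr (by positivity)
  unfold glReaction
  fun_prop

lemma norm_glReaction_le {q : ℝ} (hq : 0 < q) (β : ℝ) {z h : ℂ} {B M : ℝ} (hz : ‖z‖ ≤ B)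
    (hh : ‖h‖ ≤ M) :
    ‖glReaction q β z h‖ ≤ B + ‖1 + Complex.I * (β : ℂ)‖ * B ^ (2 * q) * B + M := by
  have hB : 0 ≤ B := (norm_nonneg z).trans hz
  refine norm_add_le_of_le (norm_sub_le_of_le hz ?_) hh
  rw [norm_mul, norm_mul, Complex.norm_real, Real.norm_of_nonneg (by positivity)]
  gcongr

lemma aestronglyMeasurable_glReaction {X : Type*} [MeasurableSpace X] {μ : Measure X} {q : ℝ}
    (hq : 0 < q) (β : ℝ) {z h : X → ℂ} (hz : AEStronglyMeasurable z μ)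
    (hh : AEStronglyMeasurable h μ) :
    AEStronglyMeasurable (fun x => glReaction q β (z x) (h x)) μ :=
  (continuous_glReaction hq β).comp_aestronglyMeasurable (hz.prodMk hh)

lemma integrable_mul_inner_glReaction {X : Type*} [MeasurableSpace X] {μ : Measure X} {φ : X → ℝ}
    (hφ : Integrable φ μ) {q : ℝ} (hq : 0 < q) (β : ℝ) {z h : X → ℂ} {B M : ℝ}
    (hz : AEStronglyMeasurable z μ) (hB : ∀ x, ‖z x‖ ≤ B) (hh : AEStronglyMeasurable h μ)
    (hM : ∀ x, ‖h x‖ ≤ M) :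
    Integrable (fun x => φ x * ⟪z x, glReaction q β (z x) (h x)⟫_ℝ) μ :=
  integrable_mul_inner_of_norm_le hφ hz hB (aestronglyMeasurable_glReaction hq β hz hh)
    fun x => norm_glReaction_le hq β (hB x) (hM x)

lemma two_mul_integral_mul_inner_glReaction_le {X : Type*} [MeasurableSpace X] {μ : Measure X}
    {φ : X → ℝ} (hφ0 : ∀ x, 0 ≤ φ x) (hφ : Integrable φ μ) {q β : ℝ} (hq : 0 < q) {z h : X → ℂ}
    {B M : ℝ} (hz : AEStronglyMeasurable z μ) (hB : ∀ x, ‖z x‖ ≤ B)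
    (hh : AEStronglyMeasurable h μ) (hM : ∀ x, ‖h x‖ ≤ M) {C L : ℝ}
    (hC : ∀ z h : ℂ, 2 * ⟪z, glReaction q β z h⟫_ℝ ≤ C + ‖h‖ ^ 2 - L * ‖z‖ ^ 2) :
    2 * ∫ x, φ x * ⟪z x, glReaction q β (z x) (h x)⟫_ℝ ∂μ ≤
      C * (∫ x, φ x ∂μ) + (∫ x, φ x * ‖h x‖ ^ 2 ∂μ) - L * ∫ x, φ x * ‖z x‖ ^ 2 ∂μ := by
  have hreact := integrable_mul_inner_glReaction hφ hq β hz hB hh hM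
  have hφh := integrable_mul_norm_sq_of_norm_le hφ hh hM
  have hφz := integrable_mul_norm_sq_of_norm_le hφ hz hB
  have hφC : Integrable (fun x => C * φ x + φ x * ‖h x‖ ^ 2) μ := (hφ.const_mul C).add hφh
  rw [← integral_const_mul, ← integral_const_mul, ← integral_const_mul,
    ← integral_add (hφ.const_mul C) hφh, ← integral_sub hφC (hφz.const_mul L)]
  refine integral_mono (hreact.const_mul 2) (hφC.sub (hφz.const_mul L)) fun x => ?_
  linarith [mul_le_mul_of_nonneg_left (hC (z x) (h x)) (hφ0 x)]

variable {d : ℕ} {q : ℝ} {h w : EuclideanSpace ℝ (Fin d) → ℂ} {B M : ℝ}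

lemma HasC2Bound.aestronglyMeasurable_glField (hw : HasC2Bound B w) (hq : 0 < q) (α β : ℝ)
    (hh : AEStronglyMeasurable h) : AEStronglyMeasurable (glField d q α β h w) :=
  (continuous_const.mul hw.continuous_lap).aestronglyMeasurable.add
    (aestronglyMeasurable_glReaction hq β hw.aestronglyMeasurable hh)

lemma HasC2Bound.norm_glField_le (hw : HasC2Bound B w) (hq : 0 < q) (α β : ℝ)
    {x : EuclideanSpace ℝ (Fin d)} (hh : ‖h x‖ ≤ M) :
    ‖glField d q α β h w x‖ ≤ ‖1 + Complex.I * (α : ℂ)‖ * (d * B) +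
      (B + ‖1 + Complex.I * (β : ℂ)‖ * B ^ (2 * q) * B + M) := by
  refine norm_add_le_of_le ?_ (norm_glReaction_le hq β (hw.norm_le x) hh)
  rw [norm_mul]
  gcongr
  exact hw.norm_lap_le x

lemma exists_two_mul_integral_mul_inner_glField_le (d : ℕ) (hq : 0 < q) (α K : ℝ) :
    ∃ C : ℝ, 0 ≤ C ∧ ∀ φ : EuclideanSpace ℝ (Fin d) → ℝ, IsLogLipschitzWeight volume K φ →
      ∀ (β : ℝ) {h w : EuclideanSpace ℝ (Fin d) → ℂ} {B M : ℝ}, HasC2Bound B w →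
      AEStronglyMeasurable h → (∀ x, ‖h x‖ ≤ M) →
        2 * ∫ x, φ x * ⟪w x, glField d q α β h w x⟫_ℝ ≤
          C * (∫ x, φ x) + (∫ x, φ x * ‖h x‖ ^ 2) - ∫ x, φ x * ‖w x‖ ^ 2 := by
  set T := ContinuousLinearMap.mul ℝ ℂ (1 + Complex.I * (α : ℂ))
  have hT (v : ℂ) : 1 * ‖v‖ ^ 2 ≤ ⟪v, T v⟫_ℝ := by
    rw [ContinuousLinearMap.mul_apply', inner_mul_self_right]
    simp
  obtain ⟨C, hC0, hC⟩ :=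
    exists_two_mul_inner_glReaction_le hq (2 * (d * (K ^ 2 * ‖T‖ ^ 2 / (4 * 1))) + 1)
  refine ⟨C, hC0, fun φ hφ β h w B M hw hh hM => ?_⟩
  have hdiff : Integrable fun x => φ x * ⟪w x, T (lap d w x)⟫_ℝ :=
    integrable_mul_inner_of_norm_le hφ.integrable hw.aestronglyMeasurable hw.norm_le
      (T.continuous.comp hw.continuous_lap).aestronglyMeasurable
      fun x => T.le_opNorm_of_le (hw.norm_lap_le x)
  have hreact := integrable_mul_inner_glReaction hφ.integrable hq β hw.aestronglyMeasurable
    hw.norm_le hh hM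
  have hsplit : ∫ x, φ x * ⟪w x, glField d q α β h w x⟫_ℝ =
      (∫ x, φ x * ⟪w x, T (lap d w x)⟫_ℝ) +
        ∫ x, φ x * ⟪w x, glReaction q β (w x) (h x)⟫_ℝ := by
    rw [← integral_add hdiff hreact]
    simp only [glField, inner_add_right, mul_add, T, ContinuousLinearMap.mul_apply']
  have hdiff_le := hφ.integral_mul_inner_lap_le hw one_pos hT
  have hreact_le := two_mul_integral_mul_inner_glReaction_le hφ.nonneg hφ.integrable hq
    hw.aestronglyMeasurable hw.norm_le hh hM (hC β)
  rw [hsplit]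
  linarith

end GinzburgLandau

section EnergyDerivative

variable {X H : Type*} [MeasurableSpace X] {μ : Measure X} [NormedAddCommGroup H]
  {φ : X → ℝ} {u : X → ℝ → H} {S : Set ℝ} {B : ℝ}

lemma continuousOn_integral_mul_norm_sq (hφ : Integrable φ μ)
    (hu : ∀ t ∈ S, AEStronglyMeasurable (fun x => u x t) μ) (hB : ∀ t ∈ S, ∀ x, ‖u x t‖ ≤ B)
    (hcont : ∀ x, ContinuousOn (u x) S) :
    ContinuousOn (fun t => ∫ x, φ x * ‖u x t‖ ^ 2 ∂μ) S := by
  refine continuousOn_of_dominated (bound := fun x => ‖φ x‖ * B ^ 2)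
    (fun t ht => hφ.aestronglyMeasurable.mul ((hu t ht).norm.pow 2))
    (fun t ht => .of_forall fun x => ?_) (hφ.norm.mul_const _)
    (.of_forall fun x => continuousOn_const.mul ((hcont x).norm.pow 2))
  rw [norm_mul, norm_pow, norm_norm]
  gcongr
  exact hB t ht x

lemma hasDerivAt_integral_mul_norm_sq [InnerProductSpace ℝ H] (hφ : Integrable φ μ)
    {u' : X → ℝ → H} {B' t : ℝ} (hS : S ∈ 𝓝 t)
    (hu : ∀ s ∈ S, AEStronglyMeasurable (fun x => u x s) μ)
    (hu' : AEStronglyMeasurable (fun x => u' x t) μ) (hB : ∀ s ∈ S, ∀ x, ‖u x s‖ ≤ B)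
    (hB' : ∀ s ∈ S, ∀ x, ‖u' x s‖ ≤ B') (hderiv : ∀ x, ∀ s ∈ S, HasDerivAt (u x) (u' x s) s) :
    HasDerivAt (fun s => ∫ x, φ x * ‖u x s‖ ^ 2 ∂μ) (2 * ∫ x, φ x * ⟪u x t, u' x t⟫_ℝ ∂μ) t := by
  have ht : t ∈ S := mem_of_mem_nhds hS
  have hmeas (s : ℝ) (hs : s ∈ S) : AEStronglyMeasurable (fun x => φ x * ‖u x s‖ ^ 2) μ :=
    hφ.aestronglyMeasurable.mul ((hu s hs).norm.pow 2)
  have h := (hasDerivAt_integral_of_dominated_loc_of_deriv_le (s := S)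
    (F' := fun s x => φ x * (2 * ⟪u x s, u' x s⟫_ℝ))
    (bound := fun x => ‖φ x‖ * (‖(2 : ℝ)‖ * (B * B'))) hS
    (Filter.eventually_of_mem hS hmeas)
    (integrable_mul_norm_sq_of_norm_le hφ (hu t ht) (hB t ht))
    (hφ.aestronglyMeasurable.mul (((hu t ht).inner hu').const_mul 2))
    (.of_forall fun x s hs => norm_mul_le_of_le le_rfl (norm_mul_le_of_le le_rfl
      (norm_inner_le_mul_of_norm_le (hB s hs x) (hB' s hs x)))) (hφ.norm.mul_const _)
    (.of_forall fun x s hs => ((hderiv x s hs).norm_sq).const_mul _)).2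
  simpa only [mul_left_comm _ (2 : ℝ), integral_const_mul] using h

end EnergyDerivative

namespace IsGLSolution

variable {d : ℕ} {q α β : ℝ} {S : Set ℝ} {g u : EuclideanSpace ℝ (Fin d) → ℝ → ℂ}

lemma exists_hasC2Bound (hu : IsGLSolution d q α β S g u) :
    ∃ B : ℝ, ∀ t ∈ S, HasC2Bound B fun x => u x t := by
  obtain ⟨-, hC2, ⟨B, hB⟩, -⟩ := hu
  exact ⟨B, fun t ht => ⟨hC2 t ht, fun x => (hB t ht x).1, fun x => (hB t ht x).2.1,
    fun x => (hB t ht x).2.2⟩⟩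

lemma hasDerivWithinAt (hu : IsGLSolution d q α β S g u) (x : EuclideanSpace ℝ (Fin d)) {t : ℝ}
    (ht : t ∈ S) :
    HasDerivWithinAt (u x) (glField d q α β (fun x => g x t) (fun x => u x t) x) S t := by
  refine (hu.2.2.2 x t ht).congr_deriv ?_
  unfold glField glReaction
  ring

lemma continuousOn_integral_mul_norm_sq (hu : IsGLSolution d q α β S g u)
    {φ : EuclideanSpace ℝ (Fin d) → ℝ} (hφ : Integrable φ) :
    ContinuousOn (fun t => ∫ x, φ x * ‖u x t‖ ^ 2) S := by
  obtain ⟨B, hB⟩ := hu.exists_hasC2Bound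
  exact _root_.continuousOn_integral_mul_norm_sq hφ
    (fun t ht => (hB t ht).aestronglyMeasurable)
    (fun t ht => (hB t ht).norm_le) fun x t ht => (hu.hasDerivWithinAt x ht).continuousWithinAt

lemma hasDerivAt_integral_mul_norm_sq (hu : IsGLSolution d q α β S g u) (hq : 0 < q) {M t : ℝ}
    (ht : t ∈ interior S) (hgt : AEStronglyMeasurable fun x => g x t)
    (hM : ∀ s ∈ S, ∀ x, ‖g x s‖ ≤ M) {φ : EuclideanSpace ℝ (Fin d) → ℝ} (hφ : Integrable φ) :
    HasDerivAt (fun s => ∫ x, φ x * ‖u x s‖ ^ 2) (2 * ∫ x, φ x *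
      ⟪u x t, glField d q α β (fun x => g x t) (fun x => u x t) x⟫_ℝ) t := by
  obtain ⟨B, hB⟩ := hu.exists_hasC2Bound
  have hS (s : ℝ) (hs : s ∈ interior S) := hB s (interior_subset hs)
  exact _root_.hasDerivAt_integral_mul_norm_sq hφ
    (u' := fun x s => glField d q α β (fun x => g x s) (fun x => u x s) x)
    (isOpen_interior.mem_nhds ht)
    (fun s hs => (hS s hs).aestronglyMeasurable)
    ((hS t ht).aestronglyMeasurable_glField hq α β hgt) (fun s hs => (hS s hs).norm_le)
    (fun s hs x => (hS s hs).norm_glField_le hq α β (hM s (interior_subset hs) x))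
    fun x s hs => (hu.hasDerivWithinAt x (interior_subset hs)).hasDerivAt
      (mem_interior_iff_mem_nhds.1 hs)

end IsGLSolution

lemma sub_le_exp_neg_mul_sub_of_deriv_le {f f' : ℝ → ℝ} {a k C : ℝ}
    (hf : ContinuousOn f (Ici a)) (hderiv : ∀ t, a < t → HasDerivAt f (f' t) t)
    (hle : ∀ t, a < t → f' t ≤ k * (C - f t)) {t : ℝ} (ht : a ≤ t) :
    f t - C ≤ Real.exp (-(k * (t - a))) * (f a - C) := by
  have hweighted (s : ℝ) (hs : a < s) :
      HasDerivAt (fun s => Real.exp (k * (s - a)) * (f s - C))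
        (Real.exp (k * (s - a)) * k * (f s - C) + Real.exp (k * (s - a)) * f' s) s := by
    simpa using ((((hasDerivAt_id s).sub_const a).const_mul k).exp).fun_mul
      ((hderiv s hs).sub_const C)
  have hanti : AntitoneOn (fun s => Real.exp (k * (s - a)) * (f s - C)) (Ici a) := by
    refine antitoneOn_of_hasDerivWithinAt_nonpos (convex_Ici a)
      ((by fun_prop : Continuous fun s => Real.exp (k * (s - a))).continuousOn.mul
        (hf.sub continuousOn_const))
      (fun s hs => (hweighted s (by simpa using hs)).hasDerivWithinAt) fun s hs => ?_
    rw [mul_assoc, ← mul_add]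
    exact mul_nonpos_of_nonneg_of_nonpos (Real.exp_pos _).le
      (by linarith [hle s (by simpa using hs)])
  have hdecay : Real.exp (k * (t - a)) * (f t - C) ≤ f a - C := by
    simpa using hanti self_mem_Ici ht ht
  rwa [Real.exp_neg, ← div_eq_inv_mul, le_div_iff₀' (Real.exp_pos _)]

theorem weighted_L2_apriori_bound_general (d : ℕ) {q : ℝ} (hq : 0 < q) (α K : ℝ) :
    ∃ C : ℝ, ∀ φ : EuclideanSpace ℝ (Fin d) → ℝ, IsLogLipschitzWeight volume K φ →
      ∀ (β G : ℝ) (g : EuclideanSpace ℝ (Fin d) → ℝ → ℂ),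
      (∃ M : ℝ, ∀ t, 0 ≤ t → ∀ x, ‖g x t‖ ≤ M) →
      (∀ t, 0 ≤ t → AEStronglyMeasurable fun x => g x t) →
      (∀ t, 0 ≤ t → ∫ x, φ x * ‖g x t‖ ^ 2 ≤ G) →
      ∀ u : EuclideanSpace ℝ (Fin d) → ℝ → ℂ, IsGLSolution d q α β (Ici 0) g u →
      ∀ t, 0 ≤ t →
        ∫ x, φ x * ‖u x t‖ ^ 2 ≤
          Real.exp (-t) * (∫ x, φ x * ‖u x 0‖ ^ 2) + (C * (∫ x, φ x) + G) := by
  obtain ⟨C, hC0, hC⟩ := exists_two_mul_integral_mul_inner_glField_le d hq α K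
  refine ⟨C, fun φ hφ β G g ⟨M, hM⟩ hg hgG u hu t ht => ?_⟩
  obtain ⟨B, hB⟩ := hu.exists_hasC2Bound
  have hdecay := sub_le_exp_neg_mul_sub_of_deriv_le (k := 1) (C := C * (∫ x, φ x) + G)
    (hu.continuousOn_integral_mul_norm_sq hφ.integrable)
    (fun s hs => hu.hasDerivAt_integral_mul_norm_sq hq (by simpa using hs) (hg s hs.le) hM
      hφ.integrable)
    (fun s hs => by linarith [hC φ hφ β (hB s hs.le) (hg s hs.le) (hM s hs.le), hgG s hs.le]) ht
  have hG : 0 ≤ G := (integral_nonneg fun x => mul_nonneg (hφ.nonneg x) (by positivity)).trans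
    (hgG 0 le_rfl)
  have hconst : 0 ≤ C * (∫ x, φ x) + G :=
    add_nonneg (mul_nonneg hC0 (integral_nonneg hφ.nonneg)) hG
  rw [one_mul, sub_zero, mul_sub] at hdecay
  linarith [mul_nonneg (Real.exp_pos (-t)).le hconst]

/-- A priori bound in weighted `L²`: there is a constant `C` (depending only on
`d, q, α, δ, G`) such that every bounded classical solution of the Ginzburg–Landau
equation with forcing of weighted `L²` norm at most `G` satisfies
`∫ φ_{δ,y} |u(t)|² ≤ e^{−t} ∫ φ_{δ,y} |u(0)|² + C` for all `t ≥ 0`. -/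
theorem weighted_L2_apriori_bound (d : ℕ) (hd1 : 1 ≤ d) (hd2 : d ≤ 2)
    (q : ℝ) (hq : 1 / 2 < q) (α : ℝ) (δ : ℝ) (hδ0 : 0 < δ) (hδ1 : δ ≤ 1)
    (G : ℝ) (hG : 0 < G) :
    ∃ C : ℝ, ∀ β : ℝ, ∀ y : EuclideanSpace ℝ (Fin d),
      ∀ g : EuclideanSpace ℝ (Fin d) → ℝ → ℂ,
      (∃ M : ℝ, ∀ x t, ‖g x t‖ ≤ M) →
      ContinuousOn (fun p : EuclideanSpace ℝ (Fin d) × ℝ => g p.1 p.2)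
        (Set.univ ×ˢ Set.Ici (0 : ℝ)) →
      (∀ t : ℝ, 0 ≤ t → (∫ x, phi d δ y x * ‖g x t‖ ^ 2) ≤ G) →
      ∀ u : EuclideanSpace ℝ (Fin d) → ℝ → ℂ,
      IsGLSolution d q α β (Set.Ici (0 : ℝ)) g u →
      ∀ t : ℝ, 0 ≤ t →
        (∫ x, phi d δ y x * ‖u x t‖ ^ 2) ≤
          Real.exp (-t) * (∫ x, phi d δ y x * ‖u x 0‖ ^ 2) + C := by
  obtain ⟨C, hC⟩ := weighted_L2_apriori_bound_general d (by linarith : 0 < q) α |δ|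
  refine ⟨C * (∫ x, phi d δ 0 x) + G, fun β y g ⟨M, hM⟩ hg hgG u hu => ?_⟩
  rw [← integral_phi_eq_integral_phi_zero δ y]
  exact hC _ (isLogLipschitzWeight_phi hδ0.ne' y) β G g ⟨M, fun t _ x => hM x t⟩
    (fun t ht => (hg.comp_continuous (Continuous.prodMk_left t)
      fun x => ⟨trivial, ht⟩).aestronglyMeasurable) hgG u hu
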